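/- For every critical threshold c > 0 (e.g. the failure threshold 0.2 mm or the optimal intervention level 0.18 mm) there exists a unique time t, and this t satisfies t > γ₀, such that d(t) = c; that is, the thickness loss reaches every positive level exactly once. -/

import Mathlib

/-- The thickness-loss function of the corrosion model. -/
noncomputable def thicknessLoss (ρ η γ₀ : ℝ) (t : ℝ) : ℝ :=
  if t ≤ γ₀ then 0 else ρ * (t - (γ₀ + η) + η * Real.exp (-(t - γ₀) / η))

/-!
After the protection period the thickness loss is `ρη (exp x - (x + 1))` with `x = -(t - γ₀) / η`,
so for `ρη > 0` it is convex and continuous on `[γ₀, ∞)`, and positive except for its value `0` at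
`γ₀`. A convex function on a half-line whose strict minimum is at the endpoint is strictly
increasing and grows at least linearly, hence it takes each value above the minimum exactly once.
-/

open Set Filter

section ConvexHalfLine

variable {𝕜 : Type*} [Field 𝕜] [LinearOrder 𝕜] [IsStrictOrderedRing 𝕜] {f : 𝕜 → 𝕜} {a b : 𝕜}

theorem strictMonoOn_Ici_of_convexOn_of_forall_lt (hf : ConvexOn 𝕜 (Ici a) f)
    (hmin : ∀ x ∈ Ioi a, f a < f x) : StrictMonoOn f (Ici a) := by
  intro x hx y hy hxy
  rcases eq_or_lt_of_le (mem_Ici.mp hx) with rfl | hax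
  · exact hmin y hxy
  · exact hf.strictMonoOn self_mem_Ici hax (hmin x hax) ⟨hx, self_mem_Ici⟩ ⟨hy, hxy.le⟩ hxy

theorem tendsto_atTop_of_convexOn_Ici_of_lt (hf : ConvexOn 𝕜 (Ici a) f) (hab : a < b)
    (hfab : f a < f b) : Tendsto f atTop atTop := by
  have hslope : 0 < (f b - f a) / (b - a) := div_pos (sub_pos.mpr hfab) (sub_pos.mpr hab)
  have hsecant : Tendsto (fun x => (f b - f a) / (b - a) * (x + -a) + f a) atTop atTop :=
    tendsto_atTop_add_const_right _ _
      ((tendsto_atTop_add_const_right _ (-a) tendsto_id).const_mul_atTop hslope)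
  refine tendsto_atTop_mono' _ ?_ hsecant
  filter_upwards [eventually_ge_atTop b] with x hbx
  have hax : a < x := hab.trans_le hbx
  have hle : (f b - f a) / (b - a) ≤ (f x - f a) / (x - a) :=
    hf.secant_mono self_mem_Ici hab.le hax.le hab.ne' hax.ne' hbx
  rw [← sub_eq_add_neg]
  exact le_sub_iff_add_le.mp ((le_div_iff₀ (sub_pos.mpr hax)).mp hle)

end ConvexHalfLine

theorem bijOn_Ioi_of_convexOn_of_forall_lt {f : ℝ → ℝ} {a : ℝ} (hf : ConvexOn ℝ (Ici a) f)
    (hcont : ContinuousOn f (Ici a)) (hmin : ∀ x ∈ Ioi a, f a < f x) :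
    BijOn f (Ioi a) (Ioi (f a)) := by
  have hmono : StrictMonoOn f (Ici a) := strictMonoOn_Ici_of_convexOn_of_forall_lt hf hmin
  have htop : Tendsto f atTop atTop :=
    tendsto_atTop_of_convexOn_Ici_of_lt hf (lt_add_one a) (hmin _ (lt_add_one a))
  exact ⟨hmin, hmono.injOn.mono Ioi_subset_Ici_self, intermediate_value_Ioi hcont htop⟩

section thicknessLoss

variable {ρ η γ₀ t : ℝ}

theorem thicknessLoss_of_le (ht : t ≤ γ₀) : thicknessLoss ρ η γ₀ t = 0 :=
  if_pos ht

theorem lt_of_thicknessLoss_pos (h : 0 < thicknessLoss ρ η γ₀ t) : γ₀ < t :=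
  not_le.mp fun ht => h.ne' (thicknessLoss_of_le ht)

theorem thicknessLoss_of_ge (hη : η ≠ 0) (ht : γ₀ ≤ t) :
    thicknessLoss ρ η γ₀ t = ρ * η * (Real.exp (-(t - γ₀) / η) - (-(t - γ₀) / η + 1)) := by
  rcases ht.eq_or_lt with rfl | ht
  · simp [thicknessLoss_of_le le_rfl]
  · rw [thicknessLoss, if_neg ht.not_ge]
    field_simp
    ring

theorem thicknessLoss_pos (h : 0 < ρ * η) (ht : γ₀ < t) : 0 < thicknessLoss ρ η γ₀ t := by
  have hη : η ≠ 0 := right_ne_zero_of_mul h.ne'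
  have hx : -(t - γ₀) / η ≠ 0 := div_ne_zero (neg_ne_zero.mpr (sub_pos.mpr ht).ne') hη
  rw [thicknessLoss_of_ge hη ht.le]
  exact mul_pos h (sub_pos.mpr (Real.add_one_lt_exp hx))

theorem continuousOn_thicknessLoss (hη : η ≠ 0) :
    ContinuousOn (thicknessLoss ρ η γ₀) (Ici γ₀) :=
  ContinuousOn.congr (by fun_prop) fun _ ht => thicknessLoss_of_ge hη ht

theorem convexOn_thicknessLoss (h : 0 < ρ * η) :
    ConvexOn ℝ (Ici γ₀) (thicknessLoss ρ η γ₀) := by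
  have hη : η ≠ 0 := right_ne_zero_of_mul h.ne'
  have hremainder : ConvexOn ℝ univ fun x : ℝ => Real.exp x - (x + 1) :=
    convexOn_exp.sub ((concaveOn_id convex_univ).add_const 1)
  let rescale : ℝ →ᵃ[ℝ] ℝ := AffineMap.lineMap (γ₀ / η) ((γ₀ - 1) / η)
  have hrescale (t : ℝ) : rescale t = -(t - γ₀) / η := by
    simp only [rescale, AffineMap.lineMap_apply_ring']
    ring
  refine (((hremainder.smul h.le).comp_affineMap rescale).subset (subset_univ _)
    (convex_Ici γ₀)).congr fun t ht => ?_
  rw [thicknessLoss_of_ge hη ht, Function.comp_apply, hrescale, smul_eq_mul]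

theorem bijOn_thicknessLoss (h : 0 < ρ * η) :
    BijOn (thicknessLoss ρ η γ₀) (Ioi γ₀) (Ioi 0) := by
  have hzero : thicknessLoss ρ η γ₀ γ₀ = 0 := thicknessLoss_of_le le_rfl
  have hbij := bijOn_Ioi_of_convexOn_of_forall_lt (convexOn_thicknessLoss h)
    (continuousOn_thicknessLoss (γ₀ := γ₀) (right_ne_zero_of_mul h.ne'))
    fun t ht => hzero.trans_lt (thicknessLoss_pos h ht)
  rwa [hzero] at hbij

end thicknessLoss

theorem thicknessLoss_hits_level_general (ρ η γ₀ : ℝ) (h : 0 < ρ * η) (c : ℝ) (hc : 0 < c) :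
    (∃! t : ℝ, thicknessLoss ρ η γ₀ t = c) ∧
      (∀ t : ℝ, thicknessLoss ρ η γ₀ t = c → γ₀ < t) := by
  have hlate : ∀ t, thicknessLoss ρ η γ₀ t = c → γ₀ < t :=
    fun t ht => lt_of_thicknessLoss_pos (hc.trans_eq ht.symm)
  have hbij : BijOn (thicknessLoss ρ η γ₀) (Ioi γ₀) (Ioi 0) := bijOn_thicknessLoss h
  obtain ⟨t, ht, htc⟩ := hbij.surjOn hc
  exact ⟨⟨t, htc, fun s hs => hbij.injOn (hlate s hs) ht (hs.trans htc.symm)⟩, hlate⟩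

/-- the thickness loss reaches every positive level `c` exactly once,
at a time `t > γ₀`. -/
theorem thicknessLoss_hits_level (ρ η γ₀ : ℝ) (hρ : 0 < ρ) (hη : 0 < η) (hγ₀ : 0 ≤ γ₀) :
    ∀ c : ℝ, 0 < c →
      (∃! t : ℝ, thicknessLoss ρ η γ₀ t = c) ∧
      (∀ t : ℝ, thicknessLoss ρ η γ₀ t = c → γ₀ < t) :=
  thicknessLoss_hits_level_general ρ η γ₀ (mul_pos hρ hη)
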